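/- arXiv:1510.08313 — 6 statements merged into one kernel-verified Lean document; each statement's English description precedes it below -/
import Mathlib

section
/- Let n ≥ 1 be an integer, p > 2, a ∈ (0,1), T = (n^{p−1}p)^{−1} and ϱ₀ = (min{ap/(n(p−2)) + 1, 2})^{(p−1)/p}. Then h is a classical subsolution of the p-parabolic equation: for every (x,t) ∈ ℝ^n × ℝ with 1 < |x| < ϱ₀, 0 < t < T and 1 − ((p−2)/p^{p/(p−1)})·(|x|^{p/(p−1)} − 1)/t^{1/(p−1)} > 0, one has ∂_t h(x,t) ≤ Δ_p h(x,t). -/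
open Real Filter Set

noncomputable def spatialGrad {n : ℕ} (u : EuclideanSpace ℝ (Fin n) → ℝ → ℝ)
    (x : EuclideanSpace ℝ (Fin n)) (t : ℝ) : EuclideanSpace ℝ (Fin n) :=
  gradient (fun y => u y t) x

noncomputable def pFlux (p : ℝ) {n : ℕ} (u : EuclideanSpace ℝ (Fin n) → ℝ → ℝ)
    (x : EuclideanSpace ℝ (Fin n)) (t : ℝ) : EuclideanSpace ℝ (Fin n) :=
  ‖spatialGrad u x t‖ ^ (p - 2) • spatialGrad u x t

/-- The `p`-Laplacian in space: the divergence (trace of the spatial Fréchet derivative)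
of the vector field `y ↦ |∇u(y,t)|^(p-2) ∇u(y,t)`. -/
noncomputable def pLaplacian (p : ℝ) {n : ℕ} (u : EuclideanSpace ℝ (Fin n) → ℝ → ℝ)
    (x : EuclideanSpace ℝ (Fin n)) (t : ℝ) : ℝ :=
  LinearMap.trace ℝ (EuclideanSpace ℝ (Fin n))
    (fderiv ℝ (fun y => pFlux p u y t) x).toLinearMap

/-- `u` satisfies the `p`-parabolic equation classically at `(x,t)`. -/
def IsClassicalPParabolicAt (p : ℝ) {n : ℕ} (u : EuclideanSpace ℝ (Fin n) → ℝ → ℝ)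
    (x : EuclideanSpace ℝ (Fin n)) (t : ℝ) : Prop :=
  DifferentiableAt ℝ (fun s => u x s) t ∧
  DifferentiableAt ℝ (fun y => u y t) x ∧
  DifferentiableAt ℝ (fun y => pFlux p u y t) x ∧
  deriv (fun s => u x s) t = pLaplacian p u x t

noncomputable def gbar (p r t : ℝ) : ℝ :=
  (max 0 (1 - (p - 2) / p ^ (p / (p - 1)) * ((r ^ (p / (p - 1)) - 1) / t ^ (1 / (p - 1)))))
    ^ ((p - 1) / (p - 2))

noncomputable def hbar (p ϱ : ℝ) {n : ℕ} (x : EuclideanSpace ℝ (Fin n)) (t : ℝ) : ℝ :=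
  gbar p ‖x‖ t - gbar p ϱ t

noncomputable def htilde (H T k : ℝ) {n : ℕ} (x : EuclideanSpace ℝ (Fin n)) (t : ℝ) : ℝ :=
  H * Real.exp 2 * (1 - Real.exp ((t - T) / T - (‖x‖ - 1) / k))

/-!
Let `g = B₊ ^ ((p - 1) / (p - 2))` be the profile, with `B` its bracket. Since
`(p - 1) / (p - 2) > 1`, `g` is continuously differentiable across the free boundary `B = 0`, and
its gradient is such that `|∇g|^(p-2) ∇g = -(p t)⁻¹ g x` on all of space. Taking the divergence of
this vector field and comparing with the time derivative yields
`Δₚg - ∂ₜg = (p t)⁻¹ B₊ ^ (1 / (p - 2)) ((p t) ^ (-1 / (p - 1)) - n B₊)`.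
Outside the unit ball `B₊ ≤ 1`, while `t ≤ T` says exactly that `n ≤ (p t) ^ (-1 / (p - 1))`, so the
right-hand side is nonnegative there. Finally `h` differs from `g` by `g(ϱ, t)`, which does not
depend on `x` and is nondecreasing in `t` when `ϱ ≥ 1`, so subtracting it only lowers `∂ₜ`.
-/

theorem hasDerivAt_max_zero_rpow {q : ℝ} (hq : 1 < q) (s : ℝ) :
    HasDerivAt (fun s : ℝ => max 0 s ^ q) (q * max 0 s ^ (q - 1)) s := by
  have hzero : (0 : ℝ) ^ q = 0 := zero_rpow (by linarith)
  have hzero' : (0 : ℝ) ^ (q - 1) = 0 := zero_rpow (by linarith)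
  have nonneg_side {s : ℝ} (hs : 0 ≤ s) :
      HasDerivWithinAt (fun s : ℝ => max 0 s ^ q) (q * max 0 s ^ (q - 1)) (Ici 0) s := by
    rw [max_eq_right hs]
    exact (hasDerivAt_rpow_const (Or.inr hq.le)).hasDerivWithinAt.congr_of_mem
      (fun y hy => by rw [max_eq_right hy]) hs
  have nonpos_side {s : ℝ} (hs : s ≤ 0) :
      HasDerivWithinAt (fun s : ℝ => max 0 s ^ q) (q * max 0 s ^ (q - 1)) (Iic 0) s := by
    rw [max_eq_left hs, hzero', mul_zero]
    exact (hasDerivWithinAt_const s (Iic 0) (0 : ℝ)).congr_of_mem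
      (fun y hy => by rw [max_eq_left hy, hzero]) hs
  rcases lt_trichotomy s 0 with hs | rfl | hs
  · exact (nonpos_side hs.le).hasDerivAt (Iic_mem_nhds hs)
  · simpa only [Iic_union_Ici, hasDerivWithinAt_univ] using
      (nonpos_side le_rfl).union (nonneg_side le_rfl)
  · exact (nonneg_side hs.le).hasDerivAt (Ici_mem_nhds hs)

-- `x ↦ ‖x‖ ^ ((2 - p) / (p - 1)) • x` is the inverse of the duality map `v ↦ ‖v‖ ^ (p - 2) • v`.
theorem norm_rpow_smul_mul_norm_rpow_smul {E : Type*} [NormedAddCommGroup E] [NormedSpace ℝ E]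
    {p c : ℝ} (hp : 1 < p) (hc : 0 ≤ c) (x : E) :
    ‖(c * ‖x‖ ^ ((2 - p) / (p - 1))) • x‖ ^ (p - 2) • (c * ‖x‖ ^ ((2 - p) / (p - 1))) • x =
      c ^ (p - 1) • x := by
  rcases eq_or_ne x 0 with rfl | hx
  · simp only [smul_zero]
  have hr : 0 < ‖x‖ := norm_pos_iff.mpr hx
  have hp1 : p - 1 ≠ 0 := by linarith
  have hnorm : ‖(c * ‖x‖ ^ ((2 - p) / (p - 1))) • x‖ = c * ‖x‖ ^ (1 / (p - 1)) := by
    rw [norm_smul, norm_of_nonneg (by positivity), mul_assoc, ← rpow_add_one hr.ne']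
    congr 2
    field_simp
    ring
  have hcancel : (‖x‖ ^ (1 / (p - 1))) ^ (p - 2) * ‖x‖ ^ ((2 - p) / (p - 1)) = 1 := by
    rw [← rpow_mul hr.le, ← rpow_add hr,
      show 1 / (p - 1) * (p - 2) + (2 - p) / (p - 1) = 0 by ring, rpow_zero]
  have hpow : c ^ (p - 2) * c = c ^ (p - 1) := by
    rw [← rpow_add_one' hc (by linarith), show p - 2 + 1 = p - 1 by ring]
  rw [hnorm, smul_smul, mul_rpow hc (by positivity)]
  congr 1
  linear_combination c ^ (p - 2) * c * hcancel + hpow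

theorem trace_fderiv_smul_self {E : Type*} [NormedAddCommGroup E] [NormedSpace ℝ E]
    [FiniteDimensional ℝ E] {φ : E → ℝ} {x : E} (hφ : DifferentiableAt ℝ φ x) :
    LinearMap.trace ℝ E (fderiv ℝ (fun y => φ y • y) x).toLinearMap =
      fderiv ℝ φ x x + Module.finrank ℝ E * φ x := by
  have hderiv : fderiv ℝ (fun y => φ y • y) x =
      φ x • ContinuousLinearMap.id ℝ E + (fderiv ℝ φ x).smulRight x :=
    (hφ.hasFDerivAt.smul (hasFDerivAt_id x)).fderiv
  have htrace : LinearMap.trace ℝ E ((fderiv ℝ φ x).smulRight x).toLinearMap = fderiv ℝ φ x x :=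
    LinearMap.trace_smulRight _ _
  rw [hderiv, ContinuousLinearMap.toLinearMap_add, map_add, ContinuousLinearMap.toLinearMap_smul,
    map_smul, htrace, ContinuousLinearMap.coe_id, LinearMap.trace_id, smul_eq_mul]
  ring

theorem le_rpow_neg_one_div {q s y : ℝ} (hq : 0 < q) (hy : 0 ≤ y) (hs : 0 < s)
    (hsy : s ≤ (y ^ q)⁻¹) : y ≤ s ^ (-(1 / q)) := by
  rw [rpow_neg_eq_inv_rpow, one_div, le_rpow_inv_iff_of_pos hy (inv_nonneg.mpr hs.le) hq]
  exact le_inv_of_le_inv₀ hs hsy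

theorem self_div_sub_one {K : Type*} [Field K] {p : K} (hp : p ≠ 1) :
    p / (p - 1) = 1 / (p - 1) + 1 := by
  have hp1 : p - 1 ≠ 0 := sub_ne_zero.mpr hp
  field_simp
  ring

section Profile

/-- The truncated bracket `B₊`, of which the profile `gbar` is the power `(p - 1) / (p - 2)`. -/
noncomputable def gbarBase (p r t : ℝ) : ℝ :=
  max 0 (1 - (p - 2) / p ^ (p / (p - 1)) * ((r ^ (p / (p - 1)) - 1) / t ^ (1 / (p - 1))))

variable {p r t : ℝ}

theorem gbar_eq_gbarBase_rpow : gbar p r t = gbarBase p r t ^ ((p - 1) / (p - 2)) :=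
  rfl

theorem gbarBase_nonneg : 0 ≤ gbarBase p r t :=
  le_max_left _ _

theorem gbarBase_le_one (hp : 2 ≤ p) (hr : 1 ≤ r) (ht : 0 ≤ t) : gbarBase p r t ≤ 1 := by
  have hr' : 0 ≤ r ^ (p / (p - 1)) - 1 :=
    sub_nonneg.mpr (one_le_rpow hr (div_nonneg (by linarith) (by linarith)))
  have hsub : 0 ≤ (p - 2) / p ^ (p / (p - 1)) * ((r ^ (p / (p - 1)) - 1) / t ^ (1 / (p - 1))) := by
    positivity
  exact max_le zero_le_one (by linarith)

theorem gbar_eq_gbarBase_mul (hp : 2 < p) :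
    gbar p r t = gbarBase p r t ^ (1 / (p - 2)) * gbarBase p r t := by
  have hp2 : 0 < p - 2 := by linarith
  have hexp : (p - 1) / (p - 2) = 1 / (p - 2) + 1 := by
    field_simp
    ring
  rw [gbar_eq_gbarBase_rpow, hexp, rpow_add_one' gbarBase_nonneg (by positivity)]

theorem hasDerivAt_max_zero_rpow_gbarExponent (hp : 2 < p) (s : ℝ) :
    HasDerivAt (fun s : ℝ => max 0 s ^ ((p - 1) / (p - 2)))
      ((p - 1) / (p - 2) * max 0 s ^ (1 / (p - 2))) s := by
  have hp2 : 0 < p - 2 := by linarith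
  have hexp : (p - 1) / (p - 2) - 1 = 1 / (p - 2) := by
    field_simp
    ring
  have hq : 1 < (p - 1) / (p - 2) := (one_lt_div hp2).mpr (by linarith)
  simpa only [hexp] using hasDerivAt_max_zero_rpow hq s

theorem hasDerivAt_gbar_time (hp : 2 < p) (r : ℝ) (ht : 0 < t) :
    HasDerivAt (fun s => gbar p r s)
      ((p * t) ^ (-(p / (p - 1))) * (r ^ (p / (p - 1)) - 1) *
        gbarBase p r t ^ (1 / (p - 2))) t := by
  have hp1 : p - 1 ≠ 0 := by linarith
  have hp2 : p - 2 ≠ 0 := by linarith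
  have hp0 : 0 < p := by linarith
  have hτ : t ^ (1 / (p - 1)) ≠ 0 := (rpow_pos_of_pos ht _).ne'
  have hpow : HasDerivAt (fun s : ℝ => s ^ (1 / (p - 1)))
      (1 / (p - 1) * t ^ (1 / (p - 1) - 1)) t := hasDerivAt_rpow_const (Or.inl ht.ne')
  have hbracket : HasDerivAt (fun s => 1 - (p - 2) / p ^ (p / (p - 1)) *
      ((r ^ (p / (p - 1)) - 1) / s ^ (1 / (p - 1)))) _ t :=
    (((hasDerivAt_const t (r ^ (p / (p - 1)) - 1)).div hpow hτ).const_mul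
      ((p - 2) / p ^ (p / (p - 1)))).const_sub 1
  refine ((hasDerivAt_max_zero_rpow_gbarExponent hp _).comp t hbracket).congr_deriv ?_
  change _ * gbarBase p r t ^ (1 / (p - 2)) * _ = _
  rw [rpow_neg (by positivity), mul_rpow hp0.le ht.le, rpow_sub_one ht.ne',
    self_div_sub_one (by linarith), rpow_add_one ht.ne']
  field_simp
  ring

theorem deriv_gbar_time_nonneg (hp : 2 < p) (hr : 1 ≤ r) (ht : 0 < t) :
    0 ≤ deriv (fun s => gbar p r s) t := by
  rw [(hasDerivAt_gbar_time hp r ht).deriv]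
  have hr' : 0 ≤ r ^ (p / (p - 1)) - 1 :=
    sub_nonneg.mpr (one_le_rpow hr (div_nonneg (by linarith) (by linarith)))
  have hB : 0 ≤ gbarBase p r t := gbarBase_nonneg
  positivity

theorem hasGradientAt_gbar_norm {E : Type*} [NormedAddCommGroup E] [InnerProductSpace ℝ E]
    [CompleteSpace E] (hp : 2 < p) (ht : 0 < t) (x : E) :
    HasGradientAt (fun y : E => gbar p ‖y‖ t)
      (-(((p * t) ^ (-(1 / (p - 1))) * gbarBase p ‖x‖ t ^ (1 / (p - 2)) *
        ‖x‖ ^ ((2 - p) / (p - 1))) • x)) x := by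
  have hp1 : 0 < p - 1 := by linarith
  have hp2 : p - 2 ≠ 0 := by linarith
  have hp0 : 0 < p := by linarith
  have hq : 1 < p / (p - 1) := (one_lt_div hp1).mpr (by linarith)
  have hbracket : HasFDerivAt (fun y : E => 1 - (p - 2) / p ^ (p / (p - 1)) *
      ((‖y‖ ^ (p / (p - 1)) - 1) / t ^ (1 / (p - 1)))) _ x :=
    ((((hasFDerivAt_norm_rpow x hq).sub_const 1).mul_const
      (t ^ (1 / (p - 1)))⁻¹).const_mul ((p - 2) / p ^ (p / (p - 1)))).const_sub 1
  rw [hasGradientAt_iff_hasFDerivAt]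
  refine ((hasDerivAt_max_zero_rpow_gbarExponent hp _).comp_hasFDerivAt x hbracket).congr_fderiv ?_
  change (_ * gbarBase p ‖x‖ t ^ (1 / (p - 2))) • _ = _
  have hexp : p / (p - 1) - 2 = (2 - p) / (p - 1) := by
    field_simp
    ring
  have hcoeff : (p - 1) / (p - 2) * ((p - 2) / p ^ (p / (p - 1)) *
      ((t ^ (1 / (p - 1)))⁻¹ * (p / (p - 1)))) = (p * t) ^ (-(1 / (p - 1))) := by
    rw [rpow_neg (by positivity), mul_rpow hp0.le ht.le, mul_inv]
    have hpq : p ^ (p / (p - 1)) = p ^ (1 / (p - 1)) * p := by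
      rw [self_div_sub_one (by linarith), rpow_add_one hp0.ne']
    rw [hpq]
    field_simp
  ext v
  simp only [hexp, ← hcoeff, smul_apply, neg_apply, smul_eq_mul,
    InnerProductSpace.toDual_apply_apply, inner_neg_left, real_inner_smul_left,
    innerSL_apply_apply]
  ring

end Profile

section Barrier

variable {n : ℕ} {p t : ℝ}

theorem pFlux_hbar (hp : 2 < p) (ht : 0 < t) (ϱ : ℝ) (x : EuclideanSpace ℝ (Fin n)) :
    pFlux p (hbar p ϱ) x t = (-(p * t)⁻¹ * gbar p ‖x‖ t) • x := by
  have hp1 : p - 1 ≠ 0 := by linarith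
  have hpt : 0 < p * t := mul_pos (by linarith) ht
  have hB : 0 ≤ gbarBase p ‖x‖ t := gbarBase_nonneg
  have hgrad : HasGradientAt (fun y => hbar p ϱ y t) _ x :=
    hasGradientAt_iff_hasFDerivAt.mpr
      ((hasGradientAt_gbar_norm hp ht x).hasFDerivAt.sub_const (gbar p ϱ t))
  have hpow : ((p * t) ^ (-(1 / (p - 1))) * gbarBase p ‖x‖ t ^ (1 / (p - 2))) ^ (p - 1) =
      (p * t)⁻¹ * gbar p ‖x‖ t := by
    rw [mul_rpow (by positivity) (by positivity), ← rpow_mul hpt.le, ← rpow_mul hB,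
      show -(1 / (p - 1)) * (p - 1) = -1 by field_simp, rpow_neg_one, one_div_mul_eq_div,
      gbar_eq_gbarBase_rpow]
  rw [pFlux, spatialGrad, hgrad.gradient, norm_neg, smul_neg,
    norm_rpow_smul_mul_norm_rpow_smul (by linarith) (by positivity), hpow, neg_mul, neg_smul]

theorem differentiableAt_pFlux_hbar (hp : 2 < p) (ht : 0 < t) (ϱ : ℝ)
    (x : EuclideanSpace ℝ (Fin n)) : DifferentiableAt ℝ (fun y => pFlux p (hbar p ϱ) y t) x := by
  simp only [pFlux_hbar hp ht ϱ]
  exact ((hasGradientAt_gbar_norm hp ht x).differentiableAt.const_mul _).smul differentiableAt_id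

theorem pLaplacian_hbar (hp : 2 < p) (ht : 0 < t) (ϱ : ℝ) (x : EuclideanSpace ℝ (Fin n)) :
    pLaplacian p (hbar p ϱ) x t = (p * t)⁻¹ * gbarBase p ‖x‖ t ^ (1 / (p - 2)) *
      ((p * t) ^ (-(1 / (p - 1))) * ‖x‖ ^ (p / (p - 1)) - n * gbarBase p ‖x‖ t) := by
  have hgrad := hasGradientAt_gbar_norm hp ht x
  have hp1 : 0 < p - 1 := by linarith
  have hexp : (2 - p) / (p - 1) + 2 = p / (p - 1) := by
    field_simp
    ring
  have hnorm : ‖x‖ ^ ((2 - p) / (p - 1)) * ‖x‖ ^ 2 = ‖x‖ ^ (p / (p - 1)) := by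
    rw [← rpow_two, ← rpow_add' (norm_nonneg x) (by rw [hexp]; positivity), hexp]
  simp only [pLaplacian, pFlux_hbar hp ht ϱ]
  rw [trace_fderiv_smul_self (hgrad.differentiableAt.const_mul _), finrank_euclideanSpace_fin,
    fderiv_const_mul hgrad.differentiableAt, smul_apply, hgrad.fderiv_apply,
    inner_neg_left, real_inner_smul_left, real_inner_self_eq_norm_sq, smul_eq_mul, ← hnorm,
    gbar_eq_gbarBase_mul hp]
  ring

theorem pLaplacian_hbar_sub_deriv_gbar (hp : 2 < p) (ht : 0 < t) (ϱ : ℝ)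
    (x : EuclideanSpace ℝ (Fin n)) :
    pLaplacian p (hbar p ϱ) x t - deriv (fun s => gbar p ‖x‖ s) t =
      (p * t)⁻¹ * gbarBase p ‖x‖ t ^ (1 / (p - 2)) *
        ((p * t) ^ (-(1 / (p - 1))) - n * gbarBase p ‖x‖ t) := by
  have hpt : 0 < p * t := mul_pos (by linarith) ht
  rw [pLaplacian_hbar hp ht, (hasDerivAt_gbar_time hp ‖x‖ ht).deriv,
    self_div_sub_one (by linarith) (p := p), neg_add, ← sub_eq_add_neg,
    rpow_sub_one hpt.ne']
  ring

theorem deriv_gbar_le_pLaplacian_hbar (hp : 2 < p) (ht : 0 < t)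
    (htT : t ≤ ((n : ℝ) ^ (p - 1) * p)⁻¹) (ϱ : ℝ) {x : EuclideanSpace ℝ (Fin n)} (hx : 1 ≤ ‖x‖) :
    deriv (fun s => gbar p ‖x‖ s) t ≤ pLaplacian p (hbar p ϱ) x t := by
  have hB : 0 ≤ gbarBase p ‖x‖ t := gbarBase_nonneg
  have hpt : p * t ≤ ((n : ℝ) ^ (p - 1))⁻¹ := by
    calc p * t ≤ p * ((n : ℝ) ^ (p - 1) * p)⁻¹ := by gcongr
      _ = ((n : ℝ) ^ (p - 1))⁻¹ := by field_simp
  have hgap : 0 ≤ (p * t) ^ (-(1 / (p - 1))) - n * gbarBase p ‖x‖ t := by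
    rw [sub_nonneg]
    calc n * gbarBase p ‖x‖ t ≤ n :=
          mul_le_of_le_one_right n.cast_nonneg (gbarBase_le_one hp.le hx ht.le)
      _ ≤ (p * t) ^ (-(1 / (p - 1))) :=
          le_rpow_neg_one_div (by linarith) n.cast_nonneg (by positivity) hpt
  rw [← sub_nonneg, pLaplacian_hbar_sub_deriv_gbar hp ht]
  positivity

end Barrier

/-- Classical subsolutions of the `p`-parabolic equation at `(x, t)`: `∂ₜu ≤ Δₚu`, where all the
derivatives involved are required to exist. -/
def IsClassicalPSubparabolicAt (p : ℝ) {n : ℕ} (u : EuclideanSpace ℝ (Fin n) → ℝ → ℝ)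
    (x : EuclideanSpace ℝ (Fin n)) (t : ℝ) : Prop :=
  DifferentiableAt ℝ (fun s => u x s) t ∧
  DifferentiableAt ℝ (fun y => u y t) x ∧
  DifferentiableAt ℝ (fun y => pFlux p u y t) x ∧
  deriv (fun s => u x s) t ≤ pLaplacian p u x t

theorem stmt0_general {n : ℕ} {p ϱ t : ℝ} {x : EuclideanSpace ℝ (Fin n)} (hp : 2 < p)
    (hϱ : 1 ≤ ϱ) (hx : 1 ≤ ‖x‖) (ht : 0 < t) (htT : t ≤ ((n : ℝ) ^ (p - 1) * p)⁻¹) :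
    IsClassicalPSubparabolicAt p (hbar p ϱ) x t := by
  have hderiv (r : ℝ) : DifferentiableAt ℝ (fun s => gbar p r s) t :=
    (hasDerivAt_gbar_time hp r ht).differentiableAt
  refine ⟨(hderiv ‖x‖).sub (hderiv ϱ),
    (hasGradientAt_gbar_norm hp ht x).differentiableAt.sub_const _,
    differentiableAt_pFlux_hbar hp ht ϱ x, ?_⟩
  calc deriv (fun s => hbar p ϱ x s) t
      = deriv (fun s => gbar p ‖x‖ s) t - deriv (fun s => gbar p ϱ s) t :=
        deriv_sub (hderiv ‖x‖) (hderiv ϱ)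
    _ ≤ deriv (fun s => gbar p ‖x‖ s) t := sub_le_self _ (deriv_gbar_time_nonneg hp hϱ ht)
    _ ≤ pLaplacian p (hbar p ϱ) x t := deriv_gbar_le_pLaplacian_hbar hp ht htT ϱ hx

/-- the barrier `h` is a classical subsolution of the `p`-parabolic
equation in the annulus, for times `0 < t < T` where the bracket is positive. -/
theorem stmt0 (n : ℕ) (hn : 1 ≤ n) (p : ℝ) (hp : 2 < p) (a : ℝ) (ha : a ∈ Set.Ioo (0:ℝ) 1)
    (T ϱ₀ : ℝ)
    (hT : T = ((n : ℝ) ^ (p - 1) * p)⁻¹)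
    (hϱ : ϱ₀ = (min (a * p / ((n : ℝ) * (p - 2)) + 1) 2) ^ ((p - 1) / p))
    (x : EuclideanSpace ℝ (Fin n)) (t : ℝ)
    (hx1 : 1 < ‖x‖) (hx2 : ‖x‖ < ϱ₀) (ht0 : 0 < t) (htT : t < T)
    (hpos : 0 < 1 - (p - 2) / p ^ (p / (p - 1)) * ((‖x‖ ^ (p / (p - 1)) - 1) / t ^ (1 / (p - 1)))) :
    deriv (fun s => hbar p ϱ₀ x s) t ≤ pLaplacian p (fun y s => hbar p ϱ₀ y s) x t := by
  subst hT
  exact (stmt0_general hp (hx1.trans hx2).le hx1.le ht0 htT.le).2.2.2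
end

section
/- Let n ≥ 1 be an integer, p > 2, a ∈ (0,1), T = (n^{p−1}p)^{−1} and ϱ₀ = (min{ap/(n(p−2)) + 1, 2})^{(p−1)/p}. Then for every x ∈ ℝ^n with 1 ≤ |x| ≤ ϱ₀, the spatial gradient of h at time T satisfies |∇h(x,T)| ≥ n·exp(−n/p)·(1−a)^{n/p}. -/
open Real Filter Set

/-!
The barrier is radial, so its gradient has norm `|∂ᵣg|`. Writing `g` as the power
`(p - 1) / (p - 2)` of the positive part of `B`, one has
`-∂ᵣg = (r / (p t)) ^ (1 / (p - 1)) * B ^ (1 / (p - 2))` wherever `B > 0`. At time `T` the first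
factor is `n r ^ (1 / (p - 1)) ≥ n`, and the choice of `ϱ₀` gives `B ≥ 1 - min a c` with
`c = n (p - 2) / p`. The inequality `B - 1 ≤ B log B` turns this into `B ≥ (e⁻¹ (1 - a)) ^ c`,
and the `(p - 2)`-th root of the right-hand side is the claimed constant divided by `n`.
-/

theorem norm_gradient_comp_norm {E : Type*} [NormedAddCommGroup E] [InnerProductSpace ℝ E]
    [CompleteSpace E] {f : ℝ → ℝ} {f' : ℝ} {x : E} (hx : x ≠ 0) (hf : HasDerivAt f f' ‖x‖) :
    ‖gradient (fun y => f ‖y‖) x‖ = |f'| := by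
  have : Nontrivial E := ⟨x, 0, hx⟩
  have hnorm : DifferentiableAt ℝ (fun y : E => ‖y‖) x := differentiableAt_id.norm ℝ hx
  have hfderiv : fderiv ℝ (fun y => f ‖y‖) x = f' • fderiv ℝ (fun y : E => ‖y‖) x :=
    (hf.comp_hasFDerivAt x hnorm.hasFDerivAt).fderiv
  rw [gradient, LinearIsometryEquiv.norm_map, hfderiv, norm_smul, norm_fderiv_norm hnorm, mul_one,
    Real.norm_eq_abs]

theorem exp_neg_mul_one_sub_rpow_le_one_sub {a c u : ℝ} (ha : a < 1) (hu : 0 ≤ u) (huc : u ≤ c)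
    (hua : u ≤ a) : exp (-c) * (1 - a) ^ c ≤ 1 - u := by
  have ha' : 0 < 1 - a := by linarith
  have hu' : 0 < 1 - u := by linarith
  have hlog_neg : log (1 - a) ≤ 0 := log_nonpos ha'.le (by linarith)
  have hlog_mono : log (1 - a) ≤ log (1 - u) := log_le_log ha' (by linarith)
  have hlog : c * (log (1 - a) - 1) ≤ log (1 - u) :=
    calc c * (log (1 - a) - 1) ≤ u * (log (1 - a) - 1) :=
          mul_le_mul_of_nonpos_right huc (by linarith)
      _ ≤ u * (log (1 - u) - 1) := by gcongr
      _ ≤ log (1 - u) := by linarith [self_sub_one_le_mul_log hu'.le]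
  rw [rpow_def_of_pos ha', ← exp_add, ← le_log_iff_exp_le hu']
  linarith

theorem exp_neg_mul_mul_rpow_rpow_one_div {b q c : ℝ} (hb : 0 ≤ b) (hq : q ≠ 0) :
    (exp (-(c * q)) * b ^ (c * q)) ^ (1 / q) = exp (-c) * b ^ c := by
  rw [mul_rpow (exp_pos _).le (rpow_nonneg hb _), ← exp_mul, ← rpow_mul hb]
  field_simp

section Profile

/-- The bracket in `gbar`: the profile is its positive part to the power `(p - 1) / (p - 2)`, so up
to a constant factor it is the pressure of the `p`-parabolic equation. Unlike `gbar` it is not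
truncated at `0`. -/
noncomputable def gbarPressure (p r t : ℝ) : ℝ :=
  1 - (p - 2) / p ^ (p / (p - 1)) * ((r ^ (p / (p - 1)) - 1) / t ^ (1 / (p - 1)))

variable {p r t : ℝ}

theorem gbar_eq_gbarPressure_rpow (h : 0 ≤ gbarPressure p r t) :
    gbar p r t = gbarPressure p r t ^ ((p - 1) / (p - 2)) :=
  congrArg (· ^ ((p - 1) / (p - 2))) (max_eq_right h)

theorem div_sub_one_eq_one_add_one_div (hp : p ≠ 1) : p / (p - 1) = 1 + 1 / (p - 1) := by
  have : p - 1 ≠ 0 := sub_ne_zero.2 hp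
  field_simp
  ring

theorem rpow_div_sub_one (hr : 0 < r) (hp : p ≠ 1) :
    r ^ (p / (p - 1)) = r * r ^ (1 / (p - 1)) := by
  rw [div_sub_one_eq_one_add_one_div hp, rpow_add hr, rpow_one]

theorem hasDerivAt_gbarPressure (hp : 1 < p) (ht : 0 < t) (hr : 0 < r) :
    HasDerivAt (fun s => gbarPressure p s t)
      (-((p - 2) / (p - 1) * (r / (p * t)) ^ (1 / (p - 1)))) r := by
  have hp₁ : 0 < p - 1 := by linarith
  have hpow : HasDerivAt (fun s : ℝ => s ^ (p / (p - 1)))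
      (p / (p - 1) * r ^ (1 / (p - 1))) r := by
    convert hasDerivAt_rpow_const (Or.inl hr.ne') using 3
    rw [div_sub_one_eq_one_add_one_div hp.ne', add_sub_cancel_left]
  refine ((((hpow.sub_const 1).div_const _).const_mul _).const_sub 1).congr_deriv ?_
  rw [rpow_div_sub_one (by positivity : 0 < p) hp.ne', div_rpow hr.le (by positivity),
    mul_rpow (by positivity) ht.le]
  field_simp

theorem hasDerivAt_gbar (hp : 2 < p) (ht : 0 < t) (hr : 0 < r) (hP : 0 < gbarPressure p r t) :
    HasDerivAt (fun s => gbar p s t)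
      (-((r / (p * t)) ^ (1 / (p - 1)) * gbarPressure p r t ^ (1 / (p - 2)))) r := by
  have hp₁ : 0 < p - 1 := by linarith
  have hp₂ : 0 < p - 2 := by linarith
  have hpressure := hasDerivAt_gbarPressure (p := p) (by linarith) ht hr
  have hgbar : (fun s => gbar p s t) =ᶠ[nhds r]
      fun s => gbarPressure p s t ^ ((p - 1) / (p - 2)) := by
    filter_upwards [hpressure.continuousAt.eventually (lt_mem_nhds hP)] with s hs
    exact gbar_eq_gbarPressure_rpow hs.le
  have hexponent : (p - 1) / (p - 2) - 1 = 1 / (p - 2) := by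
    field_simp
    ring
  refine ((hpressure.rpow_const (Or.inl hP.ne')).congr_of_eventuallyEq hgbar).congr_deriv ?_
  rw [hexponent]
  field_simp

theorem norm_gradient_gbar_norm_sub_const {E : Type*} [NormedAddCommGroup E]
    [InnerProductSpace ℝ E] [CompleteSpace E] (hp : 2 < p) (ht : 0 < t) {x : E} (hx : x ≠ 0)
    (hP : 0 < gbarPressure p ‖x‖ t) (C : ℝ) :
    ‖gradient (fun y => gbar p ‖y‖ t - C) x‖ =
      (‖x‖ / (p * t)) ^ (1 / (p - 1)) * gbarPressure p ‖x‖ t ^ (1 / (p - 2)) := by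
  rw [norm_gradient_comp_norm hx ((hasDerivAt_gbar hp ht (norm_pos_iff.2 hx) hP).sub_const C),
    abs_neg, abs_of_nonneg (by positivity)]

end Profile

section Barrier

/-- The terminal time `T` at which the barrier is estimated, with a real parameter `N` in place of
the dimension `n`. -/
noncomputable def barrierTime (p N : ℝ) : ℝ :=
  (N ^ (p - 1) * p)⁻¹

/-- The radius `ϱ₀` at which the barrier vanishes, with a real parameter `N` in place of the
dimension `n`. -/
noncomputable def barrierRadius (p N a : ℝ) : ℝ :=
  min (a * p / (N * (p - 2)) + 1) 2 ^ ((p - 1) / p)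

variable {p r N a : ℝ}

theorem barrierTime_pos (hp : 0 < p) (hN : 0 < N) : 0 < barrierTime p N := by
  unfold barrierTime
  positivity

theorem barrierTime_rpow (hp : 1 < p) (hN : 0 < N) :
    barrierTime p N ^ (1 / (p - 1)) = (N * p ^ (1 / (p - 1)))⁻¹ := by
  have hp₁ : p - 1 ≠ 0 := by linarith
  rw [barrierTime, inv_rpow (by positivity), mul_rpow (by positivity) (by positivity), one_div,
    rpow_rpow_inv hN.le hp₁]

theorem gbarPressure_barrierTime (hp : 1 < p) (hN : 0 < N) :
    gbarPressure p r (barrierTime p N) =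
      1 - N * (p - 2) / p * (r ^ (p / (p - 1)) - 1) := by
  rw [gbarPressure, barrierTime_rpow hp hN, rpow_div_sub_one (by positivity : 0 < p) hp.ne']
  field_simp

theorem le_div_mul_barrierTime_rpow (hp : 1 < p) (hN : 0 < N) (hr : 1 ≤ r) :
    N ≤ (r / (p * barrierTime p N)) ^ (1 / (p - 1)) := by
  have hp₁ : 0 < p - 1 := by linarith
  rw [barrierTime, one_div, le_rpow_inv_iff_of_pos hN.le (by positivity) hp₁]
  calc N ^ (p - 1) ≤ r * N ^ (p - 1) := le_mul_of_one_le_left (by positivity) hr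
    _ = r / (p * (N ^ (p - 1) * p)⁻¹) := by field_simp

theorem rpow_sub_one_le_of_le_barrierRadius (hp : 2 < p) (hN : 0 < N) (ha : 0 ≤ a) (hr : 0 ≤ r)
    (hrϱ : r ≤ barrierRadius p N a) :
    r ^ (p / (p - 1)) - 1 ≤ min (a * p / (N * (p - 2))) 1 := by
  have hp₁ : 0 < p - 1 := by linarith
  have hp₂ : 0 < p - 2 := by linarith
  rw [barrierRadius, ← inv_div p, le_rpow_inv_iff_of_pos hr (by positivity) (by positivity)] at hrϱ
  rwa [sub_le_iff_le_add, ← min_add_add_right, one_add_one_eq_two]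

theorem exp_neg_mul_one_sub_rpow_le_gbarPressure_barrierTime (hp : 2 < p) (hN : 0 < N) (ha : 0 ≤ a)
    (ha' : a < 1) (hr : 1 ≤ r) (hrϱ : r ≤ barrierRadius p N a) :
    exp (-(N * (p - 2) / p)) * (1 - a) ^ (N * (p - 2) / p) ≤
      gbarPressure p r (barrierTime p N) := by
  have hp₁ : 0 < p - 1 := by linarith
  have hp₂ : 0 < p - 2 := by linarith
  have hlower : 0 ≤ r ^ (p / (p - 1)) - 1 := sub_nonneg.2 (one_le_rpow hr (by positivity))
  obtain ⟨hupper_a, hupper_one⟩ :=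
    le_min_iff.1 (rpow_sub_one_le_of_le_barrierRadius hp hN ha (by positivity) hrϱ)
  rw [gbarPressure_barrierTime (by linarith) hN]
  apply exp_neg_mul_one_sub_rpow_le_one_sub ha' (by positivity)
  · exact mul_le_of_le_one_right (by positivity) hupper_one
  · calc N * (p - 2) / p * (r ^ (p / (p - 1)) - 1)
        ≤ N * (p - 2) / p * (a * p / (N * (p - 2))) := by gcongr
      _ = a := by field_simp

end Barrier

theorem stmt1_general {E : Type*} [NormedAddCommGroup E] [InnerProductSpace ℝ E] [CompleteSpace E]
    {N p a : ℝ} (hN : 0 < N) (hp : 2 < p) (ha : 0 ≤ a) (ha' : a < 1) {x : E} (hx1 : 1 ≤ ‖x‖)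
    (hx2 : ‖x‖ ≤ barrierRadius p N a) (C : ℝ) :
    N * exp (-(N / p)) * (1 - a) ^ (N / p) ≤
      ‖gradient (fun y => gbar p ‖y‖ (barrierTime p N) - C) x‖ := by
  have hp₂ : 0 < p - 2 := by linarith
  have h1a : 0 < 1 - a := by linarith
  have hx : x ≠ 0 := norm_pos_iff.1 (by linarith)
  have hT : 0 < barrierTime p N := barrierTime_pos (by positivity) hN
  have hpressure := exp_neg_mul_one_sub_rpow_le_gbarPressure_barrierTime hp hN ha ha' hx1 hx2
  have hP : 0 < gbarPressure p ‖x‖ (barrierTime p N) := lt_of_lt_of_le (by positivity) hpressure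
  calc N * exp (-(N / p)) * (1 - a) ^ (N / p)
      = N * (exp (-(N * (p - 2) / p)) * (1 - a) ^ (N * (p - 2) / p)) ^ (1 / (p - 2)) := by
        rw [mul_assoc, ← exp_neg_mul_mul_rpow_rpow_one_div h1a.le hp₂.ne', div_mul_eq_mul_div]
    _ ≤ (‖x‖ / (p * barrierTime p N)) ^ (1 / (p - 1)) *
          gbarPressure p ‖x‖ (barrierTime p N) ^ (1 / (p - 2)) := by
        gcongr
        exact le_div_mul_barrierTime_rpow (by linarith) hN hx1
    _ = ‖gradient (fun y => gbar p ‖y‖ (barrierTime p N) - C) x‖ :=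
        (norm_gradient_gbar_norm_sub_const hp hT hx hP C).symm

/-- lower bound on the spatial gradient of the barrier `h` at time `T`. -/
theorem stmt1 (n : ℕ) (hn : 1 ≤ n) (p : ℝ) (hp : 2 < p) (a : ℝ) (ha : a ∈ Set.Ioo (0:ℝ) 1)
    (T ϱ₀ : ℝ)
    (hT : T = ((n : ℝ) ^ (p - 1) * p)⁻¹)
    (hϱ : ϱ₀ = (min (a * p / ((n : ℝ) * (p - 2)) + 1) 2) ^ ((p - 1) / p))
    (x : EuclideanSpace ℝ (Fin n)) (hx1 : 1 ≤ ‖x‖) (hx2 : ‖x‖ ≤ ϱ₀) :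
    ‖gradient (fun y => hbar p ϱ₀ y T) x‖ ≥
      (n : ℝ) * Real.exp (-((n : ℝ) / p)) * (1 - a) ^ ((n : ℝ) / p) := by
  subst hT hϱ
  exact stmt1_general (Nat.cast_pos.2 hn) hp ha.1.le ha.2 hx1 hx2 _
end

section
/- Let n ≥ 1 be an integer, p > 2, a ∈ (0,1), T = (n^{p−1}p)^{−1} and ϱ₀ = (min{ap/(n(p−2)) + 1, 2})^{(p−1)/p}. Then 1 − (n(p−2)/p)·(ϱ₀^{p/(p−1)} − 1) > 0, g(ϱ₀,T)^{1/(p−1)} = (1 − (n(p−2)/p)·(ϱ₀^{p/(p−1)} − 1))^{1/(p−2)}, and g(ϱ₀,T)^{1/(p−1)} ≥ exp(−n/p)·(1−a)^{n/p}. -/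
/-!
Put `ν = n` and `c = ν (p - 2) / p`. The time `T` is chosen so that the bracket of `gbar p r T` is
`1 - c (r ^ (p / (p - 1)) - 1)`, and the radius `ϱ₀` so that its value at `ϱ₀` is `1 - min a c`.
The lower bound is the `1 / (p - 2)`-th power of `(e⁻¹ (1 - a)) ^ c ≤ 1 - min a c`. Shrinking the
exponent `c` and the parameter `a` of the left-hand side to `x = min a c` only increases it, and
`(e⁻¹ (1 - x)) ^ x ≤ 1 - x` is `y - 1 ≤ y log y` for `y = 1 - x`.
-/

open Real Filter Set

theorem exp_neg_one_mul_rpow_one_sub_le {y : ℝ} (hy : 0 ≤ y) :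
    (exp (-1) * y) ^ (1 - y) ≤ y := by
  rcases hy.eq_or_lt with rfl | hy
  · simp
  have hbase : 0 < exp (-1) * y := by positivity
  have hmul_log : 0 ≤ y * log y + 1 - y := InformationTheory.klFun_nonneg hy.le
  have hlog : log (exp (-1) * y) = -1 + log y := by
    rw [log_mul (exp_ne_zero _) hy.ne', log_exp]
  rw [← log_le_log_iff (rpow_pos_of_pos hbase _) hy, log_rpow hbase, hlog]
  linarith

theorem exp_neg_one_mul_one_sub_rpow_le_one_sub_min {a c : ℝ} (ha₀ : 0 ≤ a) (ha₁ : a ≤ 1)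
    (hc : 0 ≤ c) : (exp (-1) * (1 - a)) ^ c ≤ 1 - min a c := by
  have hmin₀ : 0 ≤ min a c := le_min ha₀ hc
  have hmin_a : min a c ≤ a := min_le_left a c
  have hbase₀ : 0 ≤ exp (-1) * (1 - a) := mul_nonneg (exp_pos _).le (by linarith)
  have hbase₁ : exp (-1) * (1 - a) ≤ 1 :=
    mul_le_one₀ (exp_le_one_iff.mpr (by norm_num)) (by linarith) (by linarith)
  calc (exp (-1) * (1 - a)) ^ c
      ≤ (exp (-1) * (1 - a)) ^ min a c :=
        rpow_le_rpow_of_exponent_ge' hbase₀ hbase₁ hmin₀ (min_le_right a c)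
    _ ≤ (exp (-1) * (1 - min a c)) ^ min a c := by gcongr
    _ ≤ 1 - min a c := by
        simpa only [sub_sub_cancel] using
          exp_neg_one_mul_rpow_one_sub_le (y := 1 - min a c) (by linarith)

theorem mul_min_div_add_one_two_sub_one (a : ℝ) {c : ℝ} (hc : 0 < c) :
    c * (min (a / c + 1) 2 - 1) = min a c := by
  calc c * (min (a / c + 1) 2 - 1)
      = c * min (a / c) 1 := by rw [← min_sub_sub_right]; norm_num
    _ = min a c := by rw [mul_min_of_nonneg _ _ hc.le, mul_div_cancel₀ a hc.ne', mul_one]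

theorem gbar_inv_rpow_mul {p ν : ℝ} (hp₀ : 0 < p) (hp₁ : p ≠ 1) (hν : 0 ≤ ν) (r : ℝ) :
    gbar p r (ν ^ (p - 1) * p)⁻¹ =
      (max 0 (1 - ν * (p - 2) / p * (r ^ (p / (p - 1)) - 1))) ^ ((p - 1) / (p - 2)) := by
  have hp₁' : p - 1 ≠ 0 := sub_ne_zero.mpr hp₁
  have htime : ((ν ^ (p - 1) * p)⁻¹) ^ (1 / (p - 1)) = (ν * p ^ (1 / (p - 1)))⁻¹ := by
    rw [inv_rpow (by positivity), mul_rpow (by positivity) hp₀.le, one_div,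
      rpow_rpow_inv hν hp₁']
  have hpow : p ^ (p / (p - 1)) = p * p ^ (1 / (p - 1)) := by
    have hexponent : p / (p - 1) = 1 + 1 / (p - 1) := by field_simp; ring
    rw [hexponent, rpow_add hp₀, rpow_one]
  have hroot : p ^ (1 / (p - 1)) ≠ 0 := (rpow_pos_of_pos hp₀ _).ne'
  rw [gbar, htime, hpow, div_inv_eq_mul]
  congr 3
  field_simp

theorem gbar_inv_rpow_mul_rpow_one_div {p ν : ℝ} (hp₀ : 0 < p) (hp₁ : p ≠ 1) (hν : 0 ≤ ν)
    (r : ℝ) :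
    gbar p r (ν ^ (p - 1) * p)⁻¹ ^ (1 / (p - 1)) =
      (max 0 (1 - ν * (p - 2) / p * (r ^ (p / (p - 1)) - 1))) ^ (1 / (p - 2)) := by
  have hp₁' : p - 1 ≠ 0 := sub_ne_zero.mpr hp₁
  rw [gbar_inv_rpow_mul hp₀ hp₁ hν, ← rpow_mul (le_max_left _ _)]
  congr 1
  field_simp

theorem exp_neg_mul_one_sub_rpow_le_one_sub_min_rpow {p ν a : ℝ} (hp : 2 < p) (hν : 0 ≤ ν)
    (ha₀ : 0 ≤ a) (ha₁ : a ≤ 1) :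
    exp (-(ν / p)) * (1 - a) ^ (ν / p) ≤ (1 - min a (ν * (p - 2) / p)) ^ (1 / (p - 2)) := by
  have hp₂ : 0 < p - 2 := by linarith
  have h1a : 0 ≤ 1 - a := by linarith
  have hexponent : ν / p = ν * (p - 2) / p * (1 / (p - 2)) := by field_simp
  calc exp (-(ν / p)) * (1 - a) ^ (ν / p)
      = (exp (-1) * (1 - a)) ^ (ν / p) := by
        rw [mul_rpow (exp_pos _).le h1a, ← exp_mul, neg_one_mul]
    _ = ((exp (-1) * (1 - a)) ^ (ν * (p - 2) / p)) ^ (1 / (p - 2)) := by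
        rw [← rpow_mul (by positivity), ← hexponent]
    _ ≤ (1 - min a (ν * (p - 2) / p)) ^ (1 / (p - 2)) := by
        gcongr
        exact exp_neg_one_mul_one_sub_rpow_le_one_sub_min ha₀ ha₁ (by positivity)

theorem stmt6_general {ν p a T ϱ₀ : ℝ} (hν : 0 < ν) (hp : 2 < p) (ha : a ∈ Set.Ico (0 : ℝ) 1)
    (hT : T = (ν ^ (p - 1) * p)⁻¹)
    (hϱ : ϱ₀ = (min (a * p / (ν * (p - 2)) + 1) 2) ^ ((p - 1) / p)) :
    0 < 1 - ν * (p - 2) / p * (ϱ₀ ^ (p / (p - 1)) - 1) ∧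
    gbar p ϱ₀ T ^ (1 / (p - 1)) =
      (1 - ν * (p - 2) / p * (ϱ₀ ^ (p / (p - 1)) - 1)) ^ (1 / (p - 2)) ∧
    gbar p ϱ₀ T ^ (1 / (p - 1)) ≥ exp (-(ν / p)) * (1 - a) ^ (ν / p) := by
  obtain ⟨ha₀, ha₁⟩ := ha
  have hp₂ : 0 < p - 2 := by linarith
  have hc : 0 < ν * (p - 2) / p := div_pos (mul_pos hν hp₂) (by linarith)
  have hradius : ϱ₀ ^ (p / (p - 1)) = min (a / (ν * (p - 2) / p) + 1) 2 := by
    rw [hϱ, ← inv_div (p - 1) p, rpow_rpow_inv (by positivity)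
      (div_pos (by linarith) (by linarith)).ne', div_div_eq_mul_div]
  have hterm : ν * (p - 2) / p * (ϱ₀ ^ (p / (p - 1)) - 1) = min a (ν * (p - 2) / p) := by
    rw [hradius, mul_min_div_add_one_two_sub_one a hc]
  have hbracket : 0 < 1 - min a (ν * (p - 2) / p) := sub_pos.mpr (min_lt_of_left_lt ha₁)
  have hgbar : gbar p ϱ₀ T ^ (1 / (p - 1)) = (1 - min a (ν * (p - 2) / p)) ^ (1 / (p - 2)) := by
    rw [hT, gbar_inv_rpow_mul_rpow_one_div (by linarith) (by linarith) hν.le, hterm,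
      max_eq_right hbracket.le]
  rw [hterm, hgbar]
  exact ⟨hbracket, rfl, exp_neg_mul_one_sub_rpow_le_one_sub_min_rpow hp hν.le ha₀ ha₁.le⟩

/-- positivity of the bracket at `(ϱ₀, T)` and the lower bound
`g(ϱ₀,T)^(1/(p-1)) ≥ exp(-n/p) (1-a)^(n/p)`. -/
theorem stmt6 (n : ℕ) (hn : 1 ≤ n) (p : ℝ) (hp : 2 < p) (a : ℝ) (ha : a ∈ Set.Ioo (0:ℝ) 1)
    (T ϱ₀ : ℝ)
    (hT : T = ((n : ℝ) ^ (p - 1) * p)⁻¹)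
    (hϱ : ϱ₀ = (min (a * p / ((n : ℝ) * (p - 2)) + 1) 2) ^ ((p - 1) / p)) :
    0 < 1 - (n : ℝ) * (p - 2) / p * (ϱ₀ ^ (p / (p - 1)) - 1) ∧
    gbar p ϱ₀ T ^ ((1:ℝ) / (p - 1))
      = (1 - (n : ℝ) * (p - 2) / p * (ϱ₀ ^ (p / (p - 1)) - 1)) ^ ((1:ℝ) / (p - 2)) ∧
    gbar p ϱ₀ T ^ ((1:ℝ) / (p - 1)) ≥ Real.exp (-((n : ℝ) / p)) * (1 - a) ^ ((n : ℝ) / p) := by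
  exact stmt6_general (Nat.cast_pos.mpr hn) hp (Ioo_subset_Ico_self ha) hT hϱ
end

section
/- Let p > 2, n ≥ 1 an integer, T, H > 0 and 0 < k ≤ k₀ = min{(p−1)/n, T^{1/(p−1)} H^{(p−2)/(p−1)}}. Then h̃ is a classical supersolution of the p-parabolic equation in N = {(x,t) : 1 < |x| < 1+k, 0 < t < T}: for every (x,t) ∈ N one has ∂_t h̃(x,t) ≥ Δ_p h̃(x,t). -/
open Real Filter Set

/-!
Away from the origin, a radial function with profile `φ` has `p`-Laplacian
`ψ' + (n - 1) / r * ψ`, where `ψ = |φ'| ^ (p - 2) φ'`. For `h̃ = H e² - w`, with `w` an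
exponential wave, one has `∂ₜ h̃ = -w / T` and `φ' = w / k`, so
`Δ_p h̃ = (w / k) ^ (p - 1) * ((n - 1) / r - (p - 1) / k)`. The bound `k ≤ (p - 1) / n` makes the
last factor at most `-1`, and the other bound on `k` gives `w / T ≤ (w / k) ^ (p - 1)` as long as
`w ≥ H`, that is, as long as `(r - 1) / k ≤ 1 + t / T`.
-/

/-- `u` is a classical supersolution of the `p`-parabolic equation at `(x,t)`: the derivatives
entering the equation exist, and `∂ₜ u ≥ Δ_p u` there. -/
def IsClassicalPSupersolutionAt (p : ℝ) {n : ℕ} (u : EuclideanSpace ℝ (Fin n) → ℝ → ℝ)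
    (x : EuclideanSpace ℝ (Fin n)) (t : ℝ) : Prop :=
  DifferentiableAt ℝ (fun s => u x s) t ∧
  DifferentiableAt ℝ (fun y => u y t) x ∧
  DifferentiableAt ℝ (fun y => pFlux p u y t) x ∧
  pLaplacian p u x t ≤ deriv (fun s => u x s) t

section RadialCalculus

variable {E : Type*} [NormedAddCommGroup E] [InnerProductSpace ℝ E] {x : E}

theorem hasFDerivAt_norm_of_ne_zero (hx : x ≠ 0) :
    HasFDerivAt (fun y : E => ‖y‖) (‖x‖⁻¹ • innerSL ℝ x) x := by
  have hsq : HasFDerivAt (fun y : E => ‖y‖ ^ 2) (2 • innerSL ℝ x) x :=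
    (hasStrictFDerivAt_norm_sq x).hasFDerivAt
  have hsqrt := hsq.sqrt (pow_ne_zero 2 (norm_ne_zero_iff.mpr hx))
  simp only [Real.sqrt_sq (norm_nonneg _)] at hsqrt
  refine hsqrt.congr_fderiv ?_
  ext v
  simp only [one_div, mul_inv_rev, smul_apply, coe_innerSL_apply, nsmul_eq_mul, Nat.cast_ofNat,
    smul_eq_mul]
  field_simp

theorem hasFDerivAt_comp_norm {φ : ℝ → ℝ} {φ' : ℝ} (hx : x ≠ 0) (hφ : HasDerivAt φ φ' ‖x‖) :
    HasFDerivAt (fun y : E => φ ‖y‖) ((φ' / ‖x‖) • innerSL ℝ x) x := by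
  refine (hφ.comp_hasFDerivAt x (hasFDerivAt_norm_of_ne_zero hx)).congr_fderiv ?_
  rw [smul_smul, div_eq_mul_inv]

theorem hasGradientAt_comp_norm [CompleteSpace E] {φ : ℝ → ℝ} {φ' : ℝ} (hx : x ≠ 0)
    (hφ : HasDerivAt φ φ' ‖x‖) :
    HasGradientAt (fun y : E => φ ‖y‖) ((φ' / ‖x‖) • x) x := by
  rw [hasGradientAt_iff_hasFDerivAt]
  refine (hasFDerivAt_comp_norm hx hφ).congr_fderiv ?_
  ext v
  simp only [smul_apply, coe_innerSL_apply, map_smul, InnerProductSpace.toDual_apply_apply]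

theorem hasFDerivAt_radialField {ψ : ℝ → ℝ} {ψ' : ℝ} (hx : x ≠ 0) (hψ : HasDerivAt ψ ψ' ‖x‖) :
    HasFDerivAt (fun y : E => (ψ ‖y‖ / ‖y‖) • y)
      ((ψ ‖x‖ / ‖x‖) • ContinuousLinearMap.id ℝ E +
        (((ψ' * ‖x‖ - ψ ‖x‖) / ‖x‖ ^ 2 / ‖x‖) • innerSL ℝ x).smulRight x) x := by
  have hquot : HasDerivAt (fun r => ψ r / r) ((ψ' * ‖x‖ - ψ ‖x‖) / ‖x‖ ^ 2) ‖x‖ := by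
    simpa only [mul_one] using hψ.fun_div (hasDerivAt_id' ‖x‖) (norm_ne_zero_iff.mpr hx)
  exact (hasFDerivAt_comp_norm hx hquot).fun_smul (hasFDerivAt_id x)

theorem trace_fderiv_radialField [FiniteDimensional ℝ E] {ψ : ℝ → ℝ} {ψ' : ℝ} (hx : x ≠ 0)
    (hψ : HasDerivAt ψ ψ' ‖x‖) :
    LinearMap.trace ℝ E (fderiv ℝ (fun y : E => (ψ ‖y‖ / ‖y‖) • y) x).toLinearMap =
      ψ' + (Module.finrank ℝ E - 1) / ‖x‖ * ψ ‖x‖ := by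
  have trace_smulRight (f : E →L[ℝ] ℝ) :
      LinearMap.trace ℝ E (f.smulRight x).toLinearMap = f x :=
    LinearMap.trace_smulRight f.toLinearMap x
  rw [(hasFDerivAt_radialField hx hψ).fderiv, ContinuousLinearMap.toLinearMap_add, map_add,
    ContinuousLinearMap.toLinearMap_smul, map_smul, ContinuousLinearMap.coe_id,
    LinearMap.trace_id, trace_smulRight]
  have hr : ‖x‖ ≠ 0 := norm_ne_zero_iff.mpr hx
  simp only [smul_eq_mul, smul_apply, innerSL_apply_apply, real_inner_self_eq_norm_sq]
  field_simp
  ring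

end RadialCalculus

section RadialPLaplacian

variable {n : ℕ} {p t : ℝ} {u : EuclideanSpace ℝ (Fin n) → ℝ → ℝ} {φ φ' : ℝ → ℝ}
  {x : EuclideanSpace ℝ (Fin n)}

theorem pFlux_of_radial (hu : ∀ y, u y t = φ ‖y‖) (hx : x ≠ 0)
    (hφ : HasDerivAt φ (φ' ‖x‖) ‖x‖) :
    pFlux p u x t = (|φ' ‖x‖| ^ (p - 2) * φ' ‖x‖ / ‖x‖) • x := by
  have hgrad : spatialGrad u x t = (φ' ‖x‖ / ‖x‖) • x := by
    simp only [spatialGrad, hu]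
    exact (hasGradientAt_comp_norm hx hφ).gradient
  have hnorm : ‖spatialGrad u x t‖ = |φ' ‖x‖| := by
    rw [hgrad, norm_smul, norm_div, norm_norm, div_mul_cancel₀ _ (norm_ne_zero_iff.mpr hx),
      Real.norm_eq_abs]
  rw [pFlux, hnorm, hgrad, smul_smul, mul_div_assoc]

theorem pFlux_eventuallyEq_of_radial (hu : ∀ y, u y t = φ ‖y‖) (hx : x ≠ 0)
    (hφ : ∀ᶠ r in nhds ‖x‖, HasDerivAt φ (φ' r) r) :
    (fun y => pFlux p u y t) =ᶠ[nhds x]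
      fun y => (|φ' ‖y‖| ^ (p - 2) * φ' ‖y‖ / ‖y‖) • y := by
  filter_upwards [isOpen_ne.mem_nhds hx, continuous_norm.continuousAt.eventually hφ] with y hy hφy
  exact pFlux_of_radial hu hy hφy

theorem differentiableAt_pFlux_of_radial (hu : ∀ y, u y t = φ ‖y‖) (hx : x ≠ 0)
    (hφ : ∀ᶠ r in nhds ‖x‖, HasDerivAt φ (φ' r) r)
    (hψ : DifferentiableAt ℝ (fun r => |φ' r| ^ (p - 2) * φ' r) ‖x‖) :
    DifferentiableAt ℝ (fun y => pFlux p u y t) x :=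
  (hasFDerivAt_radialField hx hψ.hasDerivAt).differentiableAt.congr_of_eventuallyEq
    (pFlux_eventuallyEq_of_radial hu hx hφ)

theorem pLaplacian_of_radial {ψ' : ℝ} (hu : ∀ y, u y t = φ ‖y‖) (hx : x ≠ 0)
    (hφ : ∀ᶠ r in nhds ‖x‖, HasDerivAt φ (φ' r) r)
    (hψ : HasDerivAt (fun r => |φ' r| ^ (p - 2) * φ' r) ψ' ‖x‖) :
    pLaplacian p u x t = ψ' + (n - 1) / ‖x‖ * (|φ' ‖x‖| ^ (p - 2) * φ' ‖x‖) := by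
  rw [pLaplacian, (pFlux_eventuallyEq_of_radial hu hx hφ).fderiv_eq,
    trace_fderiv_radialField hx hψ, finrank_euclideanSpace_fin]

end RadialPLaplacian

theorem rpow_sub_one_mul_self {a : ℝ} (ha : 0 < a) (q : ℝ) : a ^ (q - 1) * a = a ^ q := by
  rw [← Real.rpow_add_one ha.ne', sub_add_cancel]

theorem rpow_sub_two_mul_self {a : ℝ} (ha : 0 < a) (q : ℝ) :
    a ^ (q - 2) * a = a ^ (q - 1) := by
  rw [← rpow_sub_one_mul_self ha (q - 1), sub_sub, one_add_one_eq_two]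

/-- The exponential part `H e² exp ((t - T) / T - (r - 1) / k)` of `h̃` at radius `r = |x|`: a wave
with an exponential profile moving outwards at speed `k / T`. -/
noncomputable def expWave (H T k r t : ℝ) : ℝ :=
  H * Real.exp 2 * Real.exp ((t - T) / T - (r - 1) / k)

section ExpWave

variable {H T k r t : ℝ}

theorem htilde_eq_sub_expWave {n : ℕ} (x : EuclideanSpace ℝ (Fin n)) :
    htilde H T k x t = H * Real.exp 2 - expWave H T k ‖x‖ t := by
  rw [htilde, expWave]
  ring

theorem expWave_pos (hH : 0 < H) : 0 < expWave H T k r t := by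
  unfold expWave
  positivity

theorem le_expWave (hH : 0 ≤ H) (hT : T ≠ 0) (hr : (r - 1) / k ≤ 1 + t / T) :
    H ≤ expWave H T k r t := by
  have hexp : 0 ≤ 2 + ((t - T) / T - (r - 1) / k) := by
    rw [sub_div, div_self hT]
    linarith
  rw [expWave, mul_assoc, ← Real.exp_add]
  exact le_mul_of_one_le_right hH (Real.one_le_exp hexp)

theorem hasDerivAt_expWave_radius :
    HasDerivAt (fun r => expWave H T k r t) (-(expWave H T k r t / k)) r := by
  have harg : HasDerivAt (fun r => (t - T) / T - (r - 1) / k) (-(1 / k)) r :=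
    (((hasDerivAt_id' r).sub_const 1).div_const k).const_sub _
  refine (harg.exp.const_mul (H * Real.exp 2)).congr_deriv ?_
  unfold expWave
  ring

theorem hasDerivAt_expWave_time :
    HasDerivAt (fun t => expWave H T k r t) (expWave H T k r t / T) t := by
  have harg : HasDerivAt (fun t => (t - T) / T - (r - 1) / k) (1 / T) t :=
    (((hasDerivAt_id' t).sub_const T).div_const T).sub_const _
  refine (harg.exp.const_mul (H * Real.exp 2)).congr_deriv ?_
  unfold expWave
  ring

end ExpWave

section Htilde

variable {n : ℕ} {p H T k t : ℝ} {x : EuclideanSpace ℝ (Fin n)}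

theorem hasDerivAt_htilde_time :
    HasDerivAt (fun s => htilde H T k x s) (-(expWave H T k ‖x‖ t / T)) t := by
  simp only [htilde_eq_sub_expWave]
  exact hasDerivAt_expWave_time.const_sub _

theorem hasDerivAt_htilde_profile (r : ℝ) :
    HasDerivAt (fun r => H * Real.exp 2 - expWave H T k r t) (expWave H T k r t / k) r := by
  simpa only [neg_neg] using hasDerivAt_expWave_radius.const_sub (H * Real.exp 2)

theorem hasDerivAt_htilde_radialFlux (hH : 0 < H) (hk : 0 < k) (r : ℝ) :
    HasDerivAt (fun r => |expWave H T k r t / k| ^ (p - 2) * (expWave H T k r t / k))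
      (-((p - 1) / k * (expWave H T k r t / k) ^ (p - 1))) r := by
  have hslope (r : ℝ) : 0 < expWave H T k r t / k := div_pos (expWave_pos hH) hk
  simp only [abs_of_pos (hslope _), rpow_sub_two_mul_self (hslope _)]
  convert (hasDerivAt_expWave_radius.div_const k).rpow_const (p := p - 1)
    (Or.inl (hslope r).ne') using 1
  rw [← rpow_sub_one_mul_self (hslope r) (p - 1)]
  ring

theorem differentiableAt_htilde_space (hx : x ≠ 0) :
    DifferentiableAt ℝ (fun y => htilde H T k y t) x := by
  simp only [htilde_eq_sub_expWave]
  exact (hasFDerivAt_comp_norm hx (hasDerivAt_htilde_profile _)).differentiableAt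

theorem differentiableAt_pFlux_htilde (hH : 0 < H) (hk : 0 < k) (hx : x ≠ 0) :
    DifferentiableAt ℝ (fun y => pFlux p (htilde H T k) y t) x :=
  differentiableAt_pFlux_of_radial htilde_eq_sub_expWave hx (.of_forall hasDerivAt_htilde_profile)
    (hasDerivAt_htilde_radialFlux hH hk _).differentiableAt

theorem pLaplacian_htilde (hH : 0 < H) (hk : 0 < k) (hx : x ≠ 0) :
    pLaplacian p (htilde H T k) x t =
      -((expWave H T k ‖x‖ t / k) ^ (p - 1) * ((p - 1) / k - (n - 1) / ‖x‖)) := by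
  have hslope : 0 < expWave H T k ‖x‖ t / k := div_pos (expWave_pos hH) hk
  rw [pLaplacian_of_radial htilde_eq_sub_expWave hx (.of_forall hasDerivAt_htilde_profile)
    (hasDerivAt_htilde_radialFlux hH hk _),
    abs_of_pos hslope, rpow_sub_two_mul_self hslope]
  ring

end Htilde

section ParameterBounds

variable {p T H k : ℝ}

theorem rpow_sub_one_le_mul_rpow_sub_two (hp : 1 < p) (hT : 0 ≤ T) (hH : 0 ≤ H) (hk : 0 ≤ k)
    (hle : k ≤ T ^ (1 / (p - 1)) * H ^ ((p - 2) / (p - 1))) :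
    k ^ (p - 1) ≤ T * H ^ (p - 2) := by
  have hp₁ : 0 < p - 1 := sub_pos.mpr hp
  calc k ^ (p - 1) ≤ (T ^ (1 / (p - 1)) * H ^ ((p - 2) / (p - 1))) ^ (p - 1) :=
        Real.rpow_le_rpow hk hle hp₁.le
    _ = T * H ^ (p - 2) := by
        rw [Real.mul_rpow (by positivity) (by positivity), ← Real.rpow_mul hT,
          ← Real.rpow_mul hH, div_mul_cancel₀ _ hp₁.ne', div_mul_cancel₀ _ hp₁.ne',
          Real.rpow_one]

theorem div_le_div_rpow_sub_one {b : ℝ} (hp : 2 ≤ p) (hT : 0 < T) (hH : 0 < H) (hk : 0 < k)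
    (hle : k ≤ T ^ (1 / (p - 1)) * H ^ ((p - 2) / (p - 1))) (hb : H ≤ b) :
    b / T ≤ (b / k) ^ (p - 1) := by
  have hb₀ : 0 < b := hH.trans_le hb
  rw [Real.div_rpow hb₀.le hk.le, div_le_div_iff₀ hT (by positivity)]
  calc b * k ^ (p - 1) ≤ b * (T * H ^ (p - 2)) := by
        gcongr
        exact rpow_sub_one_le_mul_rpow_sub_two (by linarith) hT.le hH.le hk.le hle
    _ ≤ b * (T * b ^ (p - 2)) := by
        gcongr
    _ = b ^ (p - 1) * T := by
        rw [← rpow_sub_two_mul_self hb₀]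
        ring

theorem one_le_div_sub_div {m q r : ℝ} (hm : 1 ≤ m) (hk : 0 < k) (hle : k ≤ q / m)
    (hr : 1 ≤ r) : 1 ≤ q / k - (m - 1) / r := by
  have hmq : m ≤ q / k := (le_div_comm₀ hk (by linarith)).mp hle
  have hmr : (m - 1) / r ≤ m - 1 := div_le_self (by linarith) hr
  linarith

end ParameterBounds

theorem stmt8_general {p : ℝ} (hp : 2 ≤ p) {n : ℕ} {T H k : ℝ} (hT : 0 < T) (hH : 0 < H)
    (hk0 : 0 < k)
    (hk : k ≤ min ((p - 1) / (n : ℝ)) (T ^ (1 / (p - 1)) * H ^ ((p - 2) / (p - 1))))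
    {x : EuclideanSpace ℝ (Fin n)} {t : ℝ} (hx : 1 ≤ ‖x‖) (hxt : (‖x‖ - 1) / k ≤ 1 + t / T) :
    IsClassicalPSupersolutionAt p (htilde H T k) x t := by
  obtain ⟨hk_dim, hk_time⟩ := le_min_iff.mp hk
  have hx0 : x ≠ 0 := norm_pos_iff.mp (one_pos.trans_le hx)
  have hn : (1 : ℝ) ≤ n := by
    have : (0 : ℝ) < n := (div_pos_iff_of_pos_left (by linarith)).mp (hk0.trans_le hk_dim)
    exact_mod_cast this
  refine ⟨hasDerivAt_htilde_time.differentiableAt, differentiableAt_htilde_space hx0,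
    differentiableAt_pFlux_htilde hH hk0 hx0, ?_⟩
  have hrate : expWave H T k ‖x‖ t / T ≤ (expWave H T k ‖x‖ t / k) ^ (p - 1) :=
    div_le_div_rpow_sub_one hp hT hH hk0 hk_time (le_expWave hH.le hT.ne' hxt)
  have hflux : 0 ≤ (expWave H T k ‖x‖ t / k) ^ (p - 1) :=
    Real.rpow_nonneg (div_pos (expWave_pos hH) hk0).le _
  rw [pLaplacian_htilde hH hk0 hx0, hasDerivAt_htilde_time.deriv]
  exact neg_le_neg (hrate.trans
    (le_mul_of_one_le_right hflux (one_le_div_sub_div hn hk0 hk_dim hx)))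

/-- `h̃` is a classical supersolution of the `p`-parabolic equation in
`N = {(x,t) : 1 < |x| < 1+k, 0 < t < T}` provided `0 < k ≤ k₀`. -/
theorem stmt8 (p : ℝ) (hp : 2 < p) (n : ℕ) (hn : 1 ≤ n) (T H k : ℝ)
    (hT : 0 < T) (hH : 0 < H) (hk0 : 0 < k)
    (hk : k ≤ min ((p - 1) / (n : ℝ)) (T ^ (1 / (p - 1)) * H ^ ((p - 2) / (p - 1))))
    (x : EuclideanSpace ℝ (Fin n)) (t : ℝ)
    (hx1 : 1 < ‖x‖) (hx2 : ‖x‖ < 1 + k) (ht0 : 0 < t) (htT : t < T) :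
    deriv (fun s => htilde H T k x s) t ≥ pLaplacian p (fun y s => htilde H T k y s) x t := by
  have hxk : (‖x‖ - 1) / k ≤ 1 := (div_le_one hk0).mpr (by linarith)
  exact (stmt8_general hp.le hT hH hk0 hk hx1.le (by linarith [div_pos ht0 hT])).2.2.2
end

section
/- Let p ≥ 2 be a real number, n ≥ 1, and let a, b ∈ ℝ^n (with the convention |0|^{p−2}·0 = 0). Then the monotonicity inequality ⟨|a|^{p−2}a − |b|^{p−2}b, a − b⟩ ≥ 2^{2−p}·|a − b|^{p} holds, where ⟨·,·⟩ is the Euclidean inner product and |·| the Euclidean norm on ℝ^n. -/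
open Real Filter Set

open RealInnerProductSpace

/-!
With the norms of `a` and `b` held fixed, the inner product is an affine function of
`s = ‖a - b‖ ^ 2`, whereas `2 ^ (2 - p) * ‖a - b‖ ^ p = 2 ^ (2 - p) * s ^ (p / 2)` is convex in `s`.
As `s` ranges over `[(‖a‖ - ‖b‖) ^ 2, (‖a‖ + ‖b‖) ^ 2]`, it suffices to compare the two at the
endpoints. There `a` and `b` are collinear, and the claim reduces to the superadditivity of
`x ↦ x ^ (p - 1)` (same direction) or to its midpoint convexity (opposite directions).
-/

theorem sq_rpow_half {x : ℝ} (hx : 0 ≤ x) (p : ℝ) : (x ^ 2) ^ (p / 2) = x ^ p := by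
  rw [← rpow_natCast_mul hx, Nat.cast_ofNat, mul_div_cancel₀ p two_ne_zero]

theorem rpow_sub_one_eq_rpow_sub_two_mul {p x : ℝ} (hx : 0 ≤ x) (hp : p ≠ 1) :
    x ^ (p - 1) = x ^ (p - 2) * x := by
  have hexp : p - 1 = p - 2 + 1 := by ring
  rw [hexp, rpow_add_one' hx (hexp ▸ sub_ne_zero.2 hp)]

theorem two_rpow_mul_add_rpow_le_rpow_add_rpow {p x y : ℝ} (hp : 1 ≤ p) (hx : 0 ≤ x)
    (hy : 0 ≤ y) : (2 : ℝ) ^ (1 - p) * (x + y) ^ p ≤ x ^ p + y ^ p := by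
  have power_mean : (x + y) ^ p ≤ 2 ^ (p - 1) * (x ^ p + y ^ p) := by
    exact_mod_cast NNReal.rpow_add_le_mul_rpow_add_rpow ⟨x, hx⟩ ⟨y, hy⟩ hp
  rwa [← neg_sub p 1, rpow_neg zero_le_two, inv_mul_le_iff₀ (by positivity)]

theorem two_rpow_mul_add_rpow_le_rpow_add_rpow_mul_add {p x y : ℝ} (hp : 2 ≤ p)
    (hx : 0 ≤ x) (hy : 0 ≤ y) :
    (2 : ℝ) ^ (2 - p) * (x + y) ^ p ≤ (x ^ (p - 1) + y ^ (p - 1)) * (x + y) := by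
  have midpoint_convexity :=
    two_rpow_mul_add_rpow_le_rpow_add_rpow (p := p - 1) (by linarith) hx hy
  calc (2 : ℝ) ^ (2 - p) * (x + y) ^ p
      = 2 ^ (1 - (p - 1)) * (x + y) ^ (p - 1) * (x + y) := by
        rw [mul_assoc, ← rpow_add_one' (by positivity) (by linarith)]
        ring_nf
    _ ≤ (x ^ (p - 1) + y ^ (p - 1)) * (x + y) := by gcongr

theorem abs_sub_rpow_le_rpow_sub_rpow_mul_sub {p x y : ℝ} (hp : 2 ≤ p) (hx : 0 ≤ x) (hy : 0 ≤ y) :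
    |x - y| ^ p ≤ (x ^ (p - 1) - y ^ (p - 1)) * (x - y) := by
  wlog hxy : y ≤ x generalizing x y
  · rw [abs_sub_comm]
    linarith [this hy hx (le_of_not_ge hxy)]
  have hsub : 0 ≤ x - y := sub_nonneg.2 hxy
  have superadditivity : (x - y) ^ (p - 1) ≤ x ^ (p - 1) - y ^ (p - 1) := by
    simpa [le_sub_iff_add_le] using add_rpow_le_rpow_add hsub hy (p := p - 1) (by linarith)
  calc |x - y| ^ p = (x - y) ^ (p - 1) * (x - y) := by
        rw [abs_of_nonneg hsub, ← rpow_add_one' hsub (by linarith), sub_add_cancel]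
    _ ≤ (x ^ (p - 1) - y ^ (p - 1)) * (x - y) := by gcongr

theorem le_affine_of_convexOn_of_mem_Icc {s : Set ℝ} {f : ℝ → ℝ} (hf : ConvexOn ℝ s f)
    {x y z m c : ℝ} (hx : x ∈ s) (hy : y ∈ s) (hz : z ∈ Icc x y)
    (hfx : f x ≤ m * x + c) (hfy : f y ≤ m * y + c) : f z ≤ m * z + c := by
  have affine : ConcaveOn ℝ s fun t => m * t + c :=
    ((LinearMap.mulLeft ℝ m).concaveOn hf.1).add_const c
  have bound := (hf.sub affine).le_max_of_mem_Icc hx hy hz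
  exact sub_nonpos.1 (bound.trans (max_le (sub_nonpos.2 hfx) (sub_nonpos.2 hfy)))

theorem two_rpow_mul_rpow_le_of_mem_Icc {p x y d : ℝ} (hp : 2 ≤ p) (hx : 0 ≤ x) (hy : 0 ≤ y)
    (hd : d ∈ Icc |x - y| (x + y)) :
    (2 : ℝ) ^ (2 - p) * d ^ p ≤ (x ^ (p - 2) + y ^ (p - 2)) / 2 * d ^ 2 +
      (x ^ (p - 2) - y ^ (p - 2)) * (x ^ 2 - y ^ 2) / 2 := by
  have hp₁ : p ≠ 1 := (one_lt_two.trans_le hp).ne'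
  have hd₀ : 0 ≤ d := (abs_nonneg _).trans hd.1
  have convex : ConvexOn ℝ (Ici 0) fun s : ℝ => (2 : ℝ) ^ (2 - p) * s ^ (p / 2) :=
    (convexOn_rpow (by linarith)).smul (by positivity)
  have hmem : d ^ 2 ∈ Icc (|x - y| ^ 2) ((x + y) ^ 2) :=
    ⟨pow_le_pow_left₀ (abs_nonneg _) hd.1 2, pow_le_pow_left₀ hd₀ hd.2 2⟩
  rw [← sq_rpow_half hd₀]
  refine le_affine_of_convexOn_of_mem_Icc convex
    (mem_Ici.2 (sq_nonneg _)) (mem_Ici.2 (sq_nonneg _)) hmem ?_ ?_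
  · have two_rpow_le_one : (2 : ℝ) ^ (2 - p) ≤ 1 :=
      rpow_le_one_of_one_le_of_nonpos one_le_two (by linarith)
    calc (2 : ℝ) ^ (2 - p) * (|x - y| ^ 2) ^ (p / 2)
        ≤ |x - y| ^ p := by
          rw [sq_rpow_half (abs_nonneg _)]
          exact mul_le_of_le_one_left (by positivity) two_rpow_le_one
      _ ≤ (x ^ (p - 1) - y ^ (p - 1)) * (x - y) :=
          abs_sub_rpow_le_rpow_sub_rpow_mul_sub hp hx hy
      _ = _ := by
          rw [rpow_sub_one_eq_rpow_sub_two_mul hx hp₁, rpow_sub_one_eq_rpow_sub_two_mul hy hp₁,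
            sq_abs]
          ring
  · calc (2 : ℝ) ^ (2 - p) * ((x + y) ^ 2) ^ (p / 2)
        = 2 ^ (2 - p) * (x + y) ^ p := by rw [sq_rpow_half (add_nonneg hx hy)]
      _ ≤ (x ^ (p - 1) + y ^ (p - 1)) * (x + y) :=
          two_rpow_mul_add_rpow_le_rpow_add_rpow_mul_add hp hx hy
      _ = _ := by
          rw [rpow_sub_one_eq_rpow_sub_two_mul hx hp₁, rpow_sub_one_eq_rpow_sub_two_mul hy hp₁]
          ring

section InnerProductSpace

variable {E : Type*} [SeminormedAddCommGroup E] [InnerProductSpace ℝ E]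

theorem inner_smul_sub_smul_sub (α β : ℝ) (a b : E) :
    ⟪α • a - β • b, a - b⟫ =
      (α + β) / 2 * ‖a - b‖ ^ 2 + (α - β) * (‖a‖ ^ 2 - ‖b‖ ^ 2) / 2 := by
  rw [norm_sub_sq_real]
  simp only [inner_sub_left, inner_sub_right, real_inner_smul_left, real_inner_self_eq_norm_sq,
    real_inner_comm a b]
  ring

theorem stmt14_general {p : ℝ} (hp : 2 ≤ p) (a b : E) :
    (2 : ℝ) ^ (2 - p) * ‖a - b‖ ^ p ≤ ⟪‖a‖ ^ (p - 2) • a - ‖b‖ ^ (p - 2) • b, a - b⟫ := by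
  rw [inner_smul_sub_smul_sub]
  exact two_rpow_mul_rpow_le_of_mem_Icc hp (norm_nonneg a) (norm_nonneg b)
    ⟨abs_norm_sub_norm_le a b, norm_sub_le a b⟩

end InnerProductSpace

/-- the monotonicity inequality
`⟨|a|^(p-2)a - |b|^(p-2)b, a-b⟩ ≥ 2^(2-p) |a-b|^p` for `p ≥ 2`. -/
theorem stmt14 (p : ℝ) (hp : 2 ≤ p) (n : ℕ) (hn : 1 ≤ n)
    (a b : EuclideanSpace ℝ (Fin n)) :
    ⟪‖a‖ ^ (p - 2) • a - ‖b‖ ^ (p - 2) • b, a - b⟫ ≥ (2:ℝ) ^ (2 - p) * ‖a - b‖ ^ p := by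
  exact stmt14_general hp a b
end

section
/- Fix r ≥ 0 and t > 0. Then g_p(r,t) tends to exp(−(r² − 1)/(4t)) as p → 2⁺. -/
open Real Filter Set

/-!
Put `K(p) = (r ^ (p / (p - 1)) - 1) / (p ^ (p / (p - 1)) * t ^ (1 / (p - 1)))`, which is continuous
at `p = 2` with value `(r² - 1) / (4t)`. Then `g_p(r,t)` is the power `(p - 1) / (p - 2)` of the
positive part of `1 - (p - 2) K(p)`. The base tends to `1`, and the exponent times `-(p - 2) K(p)`
tends to `-K(2)`, so `g_p(r,t) → exp (-K(2))` as in Euler's limit for `exp`, from whichever side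
`p` approaches `2`.
-/

section EulerLimit

open Asymptotics
open scoped Topology

theorem isEquivalent_log_one_add : (fun x : ℝ ↦ log (1 + x)) ~[𝓝 0] id := by
  have hderiv : HasDerivAt (fun x : ℝ ↦ log (1 + x)) 1 0 := by
    simpa using ((hasDerivAt_id (0 : ℝ)).const_add 1).log (by norm_num)
  simpa using! hderiv.isLittleO

variable {α : Type*} {l : Filter α} {e g : α → ℝ} {c : ℝ}

theorem tendsto_mul_log_one_add_of_tendsto_zero (hg : Tendsto g l (𝓝 0))
    (heg : Tendsto (fun a ↦ e a * g a) l (𝓝 c)) :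
    Tendsto (fun a ↦ e a * log (1 + g a)) l (𝓝 c) :=
  (IsEquivalent.refl.mul (isEquivalent_log_one_add.comp_tendsto hg)).symm.tendsto_nhds heg

theorem tendsto_max_zero_one_add_rpow_exp (hg : Tendsto g l (𝓝 0))
    (heg : Tendsto (fun a ↦ e a * g a) l (𝓝 c)) :
    Tendsto (fun a ↦ max 0 (1 + g a) ^ e a) l (𝓝 (exp c)) := by
  refine (tendsto_mul_log_one_add_of_tendsto_zero hg heg).rexp.congr' ?_
  filter_upwards [hg.eventually_const_lt neg_one_lt_zero] with a ha
  have hpos : 0 < 1 + g a := by linarith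
  rw [max_eq_right hpos.le, rpow_def_of_pos hpos, mul_comm]

end EulerLimit

section BarenblattLimit

open scoped Topology NNReal

/-- The factor `K(p)` in `g_p(r,t) = max {0, 1 - (p - 2) K(p)} ^ ((p - 1) / (p - 2))`. -/
noncomputable def gbarCoeff (p r t : ℝ) : ℝ :=
  (r ^ (p / (p - 1)) - 1) / (p ^ (p / (p - 1)) * t ^ (1 / (p - 1)))

theorem gbar_eq_max_rpow (p r t : ℝ) :
    gbar p r t = max 0 (1 + -((p - 2) * gbarCoeff p r t)) ^ ((p - 1) / (p - 2)) := by
  rw [gbar, gbarCoeff, div_mul_div_comm, mul_div_assoc, sub_eq_add_neg]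

theorem gbarCoeff_two (r t : ℝ) : gbarCoeff 2 r t = (r ^ 2 - 1) / (4 * t) := by
  norm_num [gbarCoeff]

theorem continuousAt_gbarCoeff {p₀ t : ℝ} (hp₀ : 1 < p₀) (r : ℝ) (ht : 0 < t) :
    ContinuousAt (fun p ↦ gbarCoeff p r t) p₀ := by
  have hp₀_pos : 0 < p₀ := zero_lt_one.trans hp₀
  have hpred_pos : 0 < p₀ - 1 := sub_pos.2 hp₀
  have hpred : ContinuousAt (fun p : ℝ ↦ p - 1) p₀ := by fun_prop
  have hconj : ContinuousAt (fun p : ℝ ↦ p / (p - 1)) p₀ :=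
    continuousAt_id.div hpred hpred_pos.ne'
  have hrecip : ContinuousAt (fun p : ℝ ↦ 1 / (p - 1)) p₀ :=
    continuousAt_const.div hpred hpred_pos.ne'
  have hr_pow : ContinuousAt (fun p : ℝ ↦ r ^ (p / (p - 1))) p₀ :=
    continuousAt_const.rpow hconj (Or.inr (div_pos hp₀_pos hpred_pos))
  have hp_pow : ContinuousAt (fun p : ℝ ↦ p ^ (p / (p - 1))) p₀ :=
    continuousAt_id.rpow hconj (Or.inl hp₀_pos.ne')
  have ht_pow : ContinuousAt (fun p : ℝ ↦ t ^ (1 / (p - 1))) p₀ :=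
    continuousAt_const.rpow hrecip (Or.inl ht.ne')
  exact (hr_pow.sub continuousAt_const).div (hp_pow.mul ht_pow) (by positivity)

theorem stmt17_general (r : ℝ≥0) {t : ℝ} (ht : 0 < t) :
    Tendsto (fun p : ℝ ↦ gbar p r t) (𝓝[≠] 2) (𝓝 (exp (-(((r : ℝ) ^ 2 - 1) / (4 * t))))) := by
  have hK : ContinuousAt (fun p ↦ gbarCoeff p r t) 2 :=
    continuousAt_gbarCoeff one_lt_two r ht
  have hbase : Tendsto (fun p ↦ -((p - 2) * gbarCoeff p r t)) (𝓝[≠] 2) (𝓝 0) := by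
    have hcont : ContinuousAt (fun p ↦ -((p - 2) * gbarCoeff p r t)) 2 := by fun_prop
    simpa using hcont.tendsto.mono_left nhdsWithin_le_nhds
  have hprod : Tendsto (fun p ↦ (p - 1) / (p - 2) * -((p - 2) * gbarCoeff p r t)) (𝓝[≠] 2)
      (𝓝 (-(((r : ℝ) ^ 2 - 1) / (4 * t)))) := by
    have hcont : ContinuousAt (fun p ↦ -((p - 1) * gbarCoeff p r t)) 2 := by fun_prop
    have hlim : Tendsto (fun p ↦ -((p - 1) * gbarCoeff p r t)) (𝓝[≠] 2)
        (𝓝 (-(((r : ℝ) ^ 2 - 1) / (4 * t)))) := by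
      convert hcont.tendsto.mono_left nhdsWithin_le_nhds using 2
      rw [gbarCoeff_two]
      ring
    refine hlim.congr' ?_
    filter_upwards [self_mem_nhdsWithin] with p hp
    have hp' : p - 2 ≠ 0 := sub_ne_zero.2 hp
    field_simp
  simpa only [gbar_eq_max_rpow] using tendsto_max_zero_one_add_rpow_exp hbase hprod

end BarenblattLimit

/-- `g_p(r,t)` tends to `exp(-(r²-1)/(4t))` as `p → 2⁺`. -/
theorem stmt17 (r t : ℝ) (hr : 0 ≤ r) (ht : 0 < t) :
    Filter.Tendsto (fun p : ℝ => gbar p r t) (nhdsWithin 2 (Set.Ioi 2))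
      (nhds (Real.exp (-((r ^ 2 - 1) / (4 * t))))) :=
  (stmt17_general ⟨r, hr⟩ ht).mono_left (nhdsGT_le_nhdsNE 2)
end
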